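/- arXiv:1011.1044 — 2 statements merged into one kernel-verified Lean document; each statement's English description precedes it below -/
import Mathlib

section
/- Let A = {A_0,…,A_d} be an association scheme with Bose-Mesner algebra 𝒜, and let Γ be a group of algebra automorphisms of 𝒜. Then the set of matrices in 𝒜 fixed by every element of Γ is the Bose-Mesner algebra of a subscheme of A: there exists an association scheme B = {B_0,…,B_e} such that each B_k is a sum of some of the matrices A_i and the complex linear span of B_0,…,B_e equals {M ∈ 𝒜 : M^ψ = M for all ψ ∈ Γ}. -/
open Matrix Finset

/-- An association scheme with `d` classes on the finite vertex set `V`. -/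
structure AssocScheme (d : ℕ) (V : Type) [Fintype V] [DecidableEq V] : Type where
  A : Fin (d + 1) → Matrix V V ℂ
  entries_zero_or_one : ∀ i x y, A i x y = 0 ∨ A i x y = 1
  A_zero : A 0 = 1
  A_sum : ∑ i, A i = Matrix.of fun _ _ => 1
  transpose_mem : ∀ i, ∃ j, (A i)ᵀ = A j
  mul_eq_lin_comb : ∀ i j, ∃ p : Fin (d + 1) → ℂ, A i * A j = ∑ k, p k • A k
  mul_comm' : ∀ i j, A i * A j = A j * A i

/-- The Bose–Mesner algebra of a scheme: the complex span of its matrices. -/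
noncomputable def AssocScheme.bm {d : ℕ} {V : Type} [Fintype V] [DecidableEq V]
    (S : AssocScheme d V) : Submodule ℂ (Matrix V V ℂ) :=
  Submodule.span ℂ (Set.range S.A)

/-- `ψ` is an algebra automorphism of the Bose–Mesner algebra of `S`: a linear
bijection of the algebra onto itself respecting conjugate transposition, matrix
multiplication and the Schur (Hadamard) product. -/
def IsBMAut {d : ℕ} {V : Type} [Fintype V] [DecidableEq V]
    (S : AssocScheme d V) (ψ : Matrix V V ℂ → Matrix V V ℂ) : Prop :=
  (∀ M ∈ S.bm, ψ M ∈ S.bm) ∧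
  Set.BijOn ψ (S.bm : Set (Matrix V V ℂ)) (S.bm : Set (Matrix V V ℂ)) ∧
  (∀ M ∈ S.bm, ∀ N ∈ S.bm, ψ (M + N) = ψ M + ψ N) ∧
  (∀ (c : ℂ), ∀ M ∈ S.bm, ψ (c • M) = c • ψ M) ∧
  (∀ M ∈ S.bm, ψ Mᴴ = (ψ M)ᴴ) ∧
  (∀ M ∈ S.bm, ∀ N ∈ S.bm, ψ (M * N) = ψ M * ψ N) ∧
  (∀ M ∈ S.bm, ∀ N ∈ S.bm, ψ (Matrix.hadamard M N) = Matrix.hadamard (ψ M) (ψ N))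

/-!
A subspace `F` of matrices containing `I` and `J` and closed under `*`, `⊙` and `ᴴ` is a coherent
algebra. Closure under `⊙` makes `F` an algebra of functions on the finite set `V × V`, so by
Lagrange interpolation it contains the indicator matrix of every class of pairs of vertices that
`F` does not separate, and these 01-matrices form a basis of `F`. If `F` lies in a Bose–Mesner
algebra, then it is commutative and its members have constant diagonal, so this basis is an
association scheme. An automorphism of the Bose–Mesner algebra fixes `I` and `J`, being the units of
`*` and `⊙`, so the matrices fixed by a set of automorphisms form such an `F`.
-/

section FunctionAlgebra

variable {X K : Type*} [Field K] (F : Subalgebra K (X → K))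

lemma exists_mem_apply_eq_one_and_apply_eq_zero {f : X → K} (hf : f ∈ F) {x y : X}
    (hxy : f x ≠ f y) : ∃ g ∈ F, g x = 1 ∧ g y = 0 := by
  refine ⟨(f x - f y)⁻¹ • (f - algebraMap K (X → K) (f y)),
    F.smul_mem (F.sub_mem hf (F.algebraMap_mem _)) _, ?_, ?_⟩
  · simp [sub_ne_zero.mpr hxy]
  · simp

open Classical in
lemma ite_forall_apply_eq_mem [Finite X] (x : X) :
    (fun y => if ∀ f ∈ F, f y = f x then 1 else 0) ∈ F := by
  have := Fintype.ofFinite X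
  have separate (y : X) : ∃ g ∈ F, g x = 1 ∧ ((∃ f ∈ F, f y ≠ f x) → g y = 0) := by
    by_cases hy : ∃ f ∈ F, f y ≠ f x
    · obtain ⟨f, hf, hfy⟩ := hy
      obtain ⟨g, hg, hgx, hgy⟩ := exists_mem_apply_eq_one_and_apply_eq_zero F hf hfy.symm
      exact ⟨g, hg, hgx, fun _ => hgy⟩
    · exact ⟨1, F.one_mem, rfl, fun h => absurd h hy⟩
  choose g hgF hgx hgy using separate
  have ite_eq_prod : (fun y => if ∀ f ∈ F, f y = f x then 1 else 0) = ∏ y, g y := by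
    ext y
    rw [Finset.prod_apply]
    split_ifs with hy
    · exact (Finset.prod_eq_one fun z _ => (hy _ (hgF z)).trans (hgx z)).symm
    · push Not at hy
      exact (Finset.prod_eq_zero (f := fun z => g z y) (Finset.mem_univ y) (hgy y hy)).symm
  rw [ite_eq_prod]
  exact F.prod_mem fun y _ => hgF y

end FunctionAlgebra

section Cells

variable {V K : Type*} [Field K]

/-- The equivalence relation on pairs of vertices that identifies the positions at which every
matrix of `F` has equal entries. -/
def cellSetoid (F : Submodule K (Matrix V V K)) : Setoid (V × V) :=
  Setoid.ker fun p (M : F) => M.1 p.1 p.2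

open Classical in
/-- The 01-matrix of a class of `cellSetoid F`. For a coherent algebra `F` these matrices are its
Schur-primitive idempotents. -/
noncomputable def cellMatrix (F : Submodule K (Matrix V V K)) (c : Quotient (cellSetoid F)) :
    Matrix V V K :=
  Matrix.of fun x y => if Quotient.mk _ (x, y) = c then 1 else 0

variable {F : Submodule K (Matrix V V K)}

lemma cellSetoid_mk_eq_mk_iff {p q : V × V} :
    Quotient.mk (cellSetoid F) p = Quotient.mk (cellSetoid F) q ↔
      ∀ M ∈ F, M p.1 p.2 = M q.1 q.2 := by
  rw [Quotient.eq, cellSetoid, Setoid.ker_def, funext_iff, Subtype.forall]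

lemma cellMatrix_apply_eq_zero_or_one (c : Quotient (cellSetoid F)) (x y : V) :
    cellMatrix F c x y = 0 ∨ cellMatrix F c x y = 1 :=
  (Classical.em _).symm.imp (fun h => if_neg h) fun h => if_pos h

lemma eq_sum_smul_cellMatrix [Fintype (Quotient (cellSetoid F))] {M : Matrix V V K} (hM : M ∈ F) :
    M = ∑ c : Quotient (cellSetoid F), M c.out.1 c.out.2 • cellMatrix F c := by
  ext x y
  have apply_out := cellSetoid_mk_eq_mk_iff.mp (Quotient.out_eq (Quotient.mk (cellSetoid F) (x, y)))
  simp [cellMatrix, Matrix.sum_apply, apply_out M hM]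

lemma sum_cellMatrix [Fintype (Quotient (cellSetoid F))] :
    ∑ c, cellMatrix F c = Matrix.of fun _ _ => 1 := by
  ext x y
  simp [cellMatrix, Matrix.sum_apply]

lemma cellMatrix_mk_diag_eq_one [DecidableEq V] (one_mem : 1 ∈ F)
    (diag_const : ∀ M ∈ F, ∀ x y, M x x = M y y) (v : V) :
    cellMatrix F (Quotient.mk _ (v, v)) = 1 := by
  ext x y
  have mk_eq_iff : Quotient.mk (cellSetoid F) (x, y) = Quotient.mk _ (v, v) ↔ x = y := by
    rw [cellSetoid_mk_eq_mk_iff]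
    constructor
    · intro h
      by_contra hxy
      simpa [hxy] using h 1 one_mem
    · rintro rfl M hM
      exact diag_const M hM x v
  simp [cellMatrix, mk_eq_iff, Matrix.one_apply]

end Cells

section Coherent

variable {V K : Type*} [Fintype V] [DecidableEq V] [Field K] [StarRing K]

/-- `F` is a coherent algebra in the sense of Higman: it contains the identity and the all-ones
matrix and is closed under the matrix product, the Schur product and conjugate transposition. -/
structure IsCoherent (F : Submodule K (Matrix V V K)) : Prop where
  one_mem : 1 ∈ F
  allOnes_mem : (Matrix.of fun _ _ => 1) ∈ F
  mul_mem : ∀ M ∈ F, ∀ N ∈ F, M * N ∈ F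
  hadamard_mem : ∀ M ∈ F, ∀ N ∈ F, M ⊙ N ∈ F
  conjTranspose_mem : ∀ M ∈ F, Mᴴ ∈ F

namespace IsCoherent

variable {F : Submodule K (Matrix V V K)}

/-- A coherent algebra with its Schur product, as an algebra of functions on `V × V`. -/
def schurSubalgebra (hF : IsCoherent F) : Subalgebra K (V × V → K) :=
  (F.comap (LinearEquiv.curry K K V V ≪≫ₗ Matrix.ofLinearEquiv K).toLinearMap).toSubalgebra
    hF.allOnes_mem fun _ _ hf hg => hF.hadamard_mem _ hf _ hg

lemma uncurry_mem_schurSubalgebra (hF : IsCoherent F) {M : Matrix V V K} :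
    (fun p => M p.1 p.2) ∈ hF.schurSubalgebra ↔ M ∈ F :=
  Iff.rfl

lemma forall_mem_schurSubalgebra (hF : IsCoherent F) {p q : V × V} :
    (∀ f ∈ hF.schurSubalgebra, f p = f q) ↔ ∀ M ∈ F, M p.1 p.2 = M q.1 q.2 :=
  ⟨fun h _ hM => h _ (hF.uncurry_mem_schurSubalgebra.mpr hM),
    fun h f hf => h (Matrix.of (Function.curry f)) hf⟩

lemma cellMatrix_mem (hF : IsCoherent F) (c : Quotient (cellSetoid F)) : cellMatrix F c ∈ F := by
  induction c using Quotient.inductionOn with | h p =>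
  classical
  rw [← hF.uncurry_mem_schurSubalgebra]
  convert ite_forall_apply_eq_mem hF.schurSubalgebra p using 1
  ext q
  exact if_congr (cellSetoid_mk_eq_mk_iff.trans hF.forall_mem_schurSubalgebra.symm) rfl rfl

lemma span_range_cellMatrix (hF : IsCoherent F) :
    Submodule.span K (Set.range (cellMatrix F)) = F := by
  have := Fintype.ofFinite (Quotient (cellSetoid F))
  refine le_antisymm (Submodule.span_le.mpr (Set.range_subset_iff.mpr hF.cellMatrix_mem)) ?_
  intro M hM
  rw [eq_sum_smul_cellMatrix hM]
  exact Submodule.sum_mem _ fun c _ =>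
    Submodule.smul_mem _ _ (Submodule.subset_span (Set.mem_range_self c))

lemma mk_swap_eq_mk_swap (hF : IsCoherent F) {p q : V × V}
    (h : Quotient.mk (cellSetoid F) p = Quotient.mk _ q) :
    Quotient.mk (cellSetoid F) p.swap = Quotient.mk _ q.swap :=
  cellSetoid_mk_eq_mk_iff.mpr fun M hM =>
    star_injective (cellSetoid_mk_eq_mk_iff.mp h Mᴴ (hF.conjTranspose_mem M hM))

lemma exists_transpose_cellMatrix_eq (hF : IsCoherent F) (c : Quotient (cellSetoid F)) :
    ∃ c', (cellMatrix F c)ᵀ = cellMatrix F c' := by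
  classical
  induction c using Quotient.inductionOn with | h p =>
  refine ⟨Quotient.mk _ p.swap, ?_⟩
  ext x y
  exact if_congr ⟨hF.mk_swap_eq_mk_swap, hF.mk_swap_eq_mk_swap⟩ rfl rfl

end IsCoherent

end Coherent

section Construction

variable {V : Type} [Fintype V] [DecidableEq V]

lemma exists_assocScheme_range_A_eq {ι : Type*} [Fintype ι] (B : ι → Matrix V V ℂ)
    (zero_or_one : ∀ i x y, B i x y = 0 ∨ B i x y = 1) (o : ι) (B_o : B o = 1)
    (B_sum : ∑ i, B i = Matrix.of fun _ _ => 1) (transpose : ∀ i, ∃ j, (B i)ᵀ = B j)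
    (mul_mem : ∀ i j, B i * B j ∈ Submodule.span ℂ (Set.range B))
    (commute : ∀ i j, Commute (B i) (B j)) :
    ∃ (e : ℕ) (T : AssocScheme e V), Set.range T.A = Set.range B := by
  classical
  have := Nonempty.intro o
  obtain ⟨e, card_eq⟩ := Nat.exists_eq_succ_of_ne_zero (Fintype.card_ne_zero (α := ι))
  let f : Fin (e + 1) ≃ ι := (Fintype.equivFinOfCardEq card_eq).symm.setValue 0 o
  have range_eq : Set.range (B ∘ f) = Set.range B := f.surjective.range_comp B
  refine ⟨e, ⟨B ∘ f, fun i => zero_or_one (f i), ?_, ?_, ?_, ?_, fun i j => commute (f i) (f j)⟩,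
    range_eq⟩
  · rw [Function.comp_apply, Equiv.setValue_eq, B_o]
  · exact (f.sum_comp B).trans B_sum
  · intro i
    obtain ⟨j, hj⟩ := transpose (f i)
    exact ⟨f.symm j, by simpa using hj⟩
  · intro i j
    have mem := mul_mem (f i) (f j)
    rw [← range_eq, Submodule.mem_span_range_iff_exists_fun] at mem
    exact mem.imp fun _ => Eq.symm

lemma nonempty_assocScheme_of_isEmpty [IsEmpty V] : Nonempty (AssocScheme 0 V) :=
  ⟨{ A := 1
     entries_zero_or_one := fun _ x => isEmptyElim x
     A_zero := rfl
     A_sum := Subsingleton.elim _ _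
     transpose_mem := fun _ => ⟨0, Subsingleton.elim _ _⟩
     mul_eq_lin_comb := fun _ _ => ⟨0, Subsingleton.elim _ _⟩
     mul_comm' := fun _ _ => Subsingleton.elim _ _ }⟩

theorem IsCoherent.exists_assocScheme_bm_eq {F : Submodule ℂ (Matrix V V ℂ)} (hF : IsCoherent F)
    (commute : ∀ M ∈ F, ∀ N ∈ F, Commute M N) (diag_const : ∀ M ∈ F, ∀ x y, M x x = M y y) :
    ∃ (e : ℕ) (T : AssocScheme e V), T.bm = F := by
  rcases isEmpty_or_nonempty V with _ | ⟨⟨v⟩⟩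
  · obtain ⟨T⟩ := nonempty_assocScheme_of_isEmpty (V := V)
    exact ⟨0, T, Subsingleton.elim _ _⟩
  have := Fintype.ofFinite (Quotient (cellSetoid F))
  obtain ⟨e, T, hT⟩ := exists_assocScheme_range_A_eq (cellMatrix F)
    cellMatrix_apply_eq_zero_or_one (Quotient.mk _ (v, v))
    (cellMatrix_mk_diag_eq_one hF.one_mem diag_const v) sum_cellMatrix
    hF.exists_transpose_cellMatrix_eq
    (fun c c' => hF.span_range_cellMatrix.symm ▸
      hF.mul_mem _ (hF.cellMatrix_mem c) _ (hF.cellMatrix_mem c'))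
    (fun c c' => commute _ (hF.cellMatrix_mem c) _ (hF.cellMatrix_mem c'))
  exact ⟨e, T, by rw [AssocScheme.bm, hT, hF.span_range_cellMatrix]⟩

end Construction

namespace AssocScheme

variable {V : Type} [Fintype V] [DecidableEq V] {d : ℕ} (S : AssocScheme d V)

lemma existsUnique_A_apply_eq_one (x y : V) : ∃! i, S.A i x y = 1 := by
  classical
  have sum_eq_one : ∑ i, S.A i x y = 1 := by
    rw [← Matrix.sum_apply, S.A_sum, Matrix.of_apply]
  have eq_ite (i) : S.A i x y = if S.A i x y = 1 then 1 else 0 := by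
    rcases S.entries_zero_or_one i x y with h | h <;> simp [h]
  have card_eq_one : #{i | S.A i x y = 1} = 1 := by
    rw [Finset.sum_congr rfl fun i _ => eq_ite i, Finset.sum_boole] at sum_eq_one
    exact_mod_cast sum_eq_one
  simpa using Finset.card_eq_one_iff_existsUnique.mp card_eq_one

/-- The index of the relation of the scheme `S` that contains the pair `(x, y)`. -/
noncomputable def relIndex (x y : V) : Fin (d + 1) :=
  (S.existsUnique_A_apply_eq_one x y).choose

lemma A_apply (i : Fin (d + 1)) (x y : V) : S.A i x y = if S.relIndex x y = i then 1 else 0 := by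
  have ⟨apply_relIndex, unique⟩ := (S.existsUnique_A_apply_eq_one x y).choose_spec
  split_ifs with h
  · exact h ▸ apply_relIndex
  · exact (S.entries_zero_or_one i x y).resolve_right fun h1 => h (unique i h1).symm

lemma relIndex_self (x : V) : S.relIndex x x = 0 := by
  by_contra h
  simpa [S.A_zero, h] using S.A_apply 0 x x

lemma mem_bm_iff_exists_sum {M : Matrix V V ℂ} : M ∈ S.bm ↔ ∃ c : Fin (d + 1) → ℂ,
    ∑ i, c i • S.A i = M :=
  Submodule.mem_span_range_iff_exists_fun ℂ

lemma sum_smul_A_apply (c : Fin (d + 1) → ℂ) (x y : V) :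
    (∑ i, c i • S.A i) x y = c (S.relIndex x y) := by
  simp [Matrix.sum_apply, A_apply]

lemma mem_bm_iff_exists_apply {M : Matrix V V ℂ} : M ∈ S.bm ↔
    ∃ c : Fin (d + 1) → ℂ, ∀ x y, M x y = c (S.relIndex x y) := by
  simp only [mem_bm_iff_exists_sum, ← Matrix.ext_iff, sum_smul_A_apply, eq_comm]

lemma apply_self_eq_of_mem_bm {M : Matrix V V ℂ} (hM : M ∈ S.bm) (x y : V) : M x x = M y y := by
  obtain ⟨c, hc⟩ := S.mem_bm_iff_exists_apply.mp hM
  rw [hc, hc, relIndex_self, relIndex_self]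

lemma exists_eq_sum_A_of_mem_bm {M : Matrix V V ℂ} (hM : M ∈ S.bm)
    (zero_or_one : ∀ x y, M x y = 0 ∨ M x y = 1) :
    ∃ s : Finset (Fin (d + 1)), M = ∑ i ∈ s, S.A i := by
  obtain ⟨c, hc⟩ := S.mem_bm_iff_exists_apply.mp hM
  classical
  refine ⟨univ.filter fun i => c i = 1, ?_⟩
  ext x y
  rcases zero_or_one x y with h | h <;> simp [Matrix.sum_apply, A_apply, ← hc, h]

lemma A_mem_bm (i : Fin (d + 1)) : S.A i ∈ S.bm :=
  Submodule.subset_span (Set.mem_range_self i)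

lemma mul_mem_bm {M N : Matrix V V ℂ} (hM : M ∈ S.bm) (hN : N ∈ S.bm) : M * N ∈ S.bm := by
  have mul_le : S.bm * S.bm ≤ S.bm := by
    rw [bm, Submodule.span_mul_span, Submodule.span_le, Set.mul_subset_iff]
    rintro _ ⟨i, rfl⟩ _ ⟨j, rfl⟩
    obtain ⟨p, hp⟩ := S.mul_eq_lin_comb i j
    exact S.mem_bm_iff_exists_sum.mpr ⟨p, hp.symm⟩
  exact mul_le (Submodule.mul_mem_mul hM hN)

lemma commute_of_mem_bm {M N : Matrix V V ℂ} (hM : M ∈ S.bm) (hN : N ∈ S.bm) : Commute M N := by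
  obtain ⟨a, rfl⟩ := S.mem_bm_iff_exists_sum.mp hM
  obtain ⟨b, rfl⟩ := S.mem_bm_iff_exists_sum.mp hN
  have commute_A (i j) : Commute (S.A i) (S.A j) := S.mul_comm' i j
  exact Commute.sum_left _ _ _ fun i _ => Commute.sum_right _ _ _ fun j _ =>
    ((commute_A i j).smul_left _).smul_right _

lemma hadamard_mem_bm {M N : Matrix V V ℂ} (hM : M ∈ S.bm) (hN : N ∈ S.bm) : M ⊙ N ∈ S.bm := by
  obtain ⟨a, ha⟩ := S.mem_bm_iff_exists_apply.mp hM
  obtain ⟨b, hb⟩ := S.mem_bm_iff_exists_apply.mp hN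
  exact S.mem_bm_iff_exists_apply.mpr ⟨a * b, fun x y => by simp [ha, hb]⟩

lemma conjTranspose_A (i : Fin (d + 1)) : (S.A i)ᴴ = (S.A i)ᵀ := by
  ext x y
  rcases S.entries_zero_or_one i y x with h | h <;> simp [h]

lemma conjTranspose_mem_bm {M : Matrix V V ℂ} (hM : M ∈ S.bm) : Mᴴ ∈ S.bm := by
  obtain ⟨c, rfl⟩ := S.mem_bm_iff_exists_sum.mp hM
  rw [Matrix.conjTranspose_sum]
  refine Submodule.sum_mem _ fun i _ => ?_
  obtain ⟨j, hj⟩ := S.transpose_mem i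
  rw [Matrix.conjTranspose_smul, conjTranspose_A, hj]
  exact Submodule.smul_mem _ _ (S.A_mem_bm j)

lemma isCoherent_bm : IsCoherent S.bm where
  one_mem := S.A_zero ▸ S.A_mem_bm 0
  allOnes_mem := S.A_sum ▸ Submodule.sum_mem _ fun i _ => S.A_mem_bm i
  mul_mem _ hM _ hN := S.mul_mem_bm hM hN
  hadamard_mem _ hM _ hN := S.hadamard_mem_bm hM hN
  conjTranspose_mem _ hM := S.conjTranspose_mem_bm hM

theorem exists_subscheme_bm_eq {F : Submodule ℂ (Matrix V V ℂ)} (hF : IsCoherent F)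
    (le_bm : F ≤ S.bm) :
    ∃ (e : ℕ) (T : AssocScheme e V),
      (∀ k, ∃ s : Finset (Fin (d + 1)), T.A k = ∑ i ∈ s, S.A i) ∧ T.bm = F := by
  obtain ⟨e, T, rfl⟩ := hF.exists_assocScheme_bm_eq
    (fun _ hM _ hN => S.commute_of_mem_bm (le_bm hM) (le_bm hN))
    (fun _ hM => S.apply_self_eq_of_mem_bm (le_bm hM))
  exact ⟨e, T, fun k => S.exists_eq_sum_A_of_mem_bm (le_bm (T.A_mem_bm k))
    (T.entries_zero_or_one k), rfl⟩

end AssocScheme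

namespace IsBMAut

variable {V : Type} [Fintype V] [DecidableEq V] {d : ℕ} {S : AssocScheme d V}
  {ψ : Matrix V V ℂ → Matrix V V ℂ}

lemma map_add (hψ : IsBMAut S ψ) {M N : Matrix V V ℂ} (hM : M ∈ S.bm) (hN : N ∈ S.bm) :
    ψ (M + N) = ψ M + ψ N :=
  hψ.2.2.1 M hM N hN

lemma map_smul (hψ : IsBMAut S ψ) (c : ℂ) {M : Matrix V V ℂ} (hM : M ∈ S.bm) :
    ψ (c • M) = c • ψ M :=
  hψ.2.2.2.1 c M hM

lemma map_conjTranspose (hψ : IsBMAut S ψ) {M : Matrix V V ℂ} (hM : M ∈ S.bm) :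
    ψ Mᴴ = (ψ M)ᴴ :=
  hψ.2.2.2.2.1 M hM

lemma map_mul (hψ : IsBMAut S ψ) {M N : Matrix V V ℂ} (hM : M ∈ S.bm) (hN : N ∈ S.bm) :
    ψ (M * N) = ψ M * ψ N :=
  hψ.2.2.2.2.2.1 M hM N hN

lemma map_hadamard (hψ : IsBMAut S ψ) {M N : Matrix V V ℂ} (hM : M ∈ S.bm) (hN : N ∈ S.bm) :
    ψ (M ⊙ N) = ψ M ⊙ ψ N :=
  hψ.2.2.2.2.2.2 M hM N hN

lemma map_zero (hψ : IsBMAut S ψ) : ψ 0 = 0 := by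
  simpa using hψ.map_smul 0 S.bm.zero_mem

lemma map_one (hψ : IsBMAut S ψ) : ψ 1 = 1 := by
  have one_mem := S.isCoherent_bm.one_mem
  obtain ⟨N, hN, hψN⟩ := hψ.2.1.surjOn one_mem
  calc ψ 1 = ψ 1 * ψ N := by rw [hψN, mul_one]
    _ = ψ (1 * N) := (hψ.map_mul one_mem hN).symm
    _ = 1 := by rw [one_mul, hψN]

lemma map_allOnes (hψ : IsBMAut S ψ) :
    ψ (Matrix.of fun _ _ => 1) = Matrix.of fun _ _ => 1 := by
  have allOnes_mem := S.isCoherent_bm.allOnes_mem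
  obtain ⟨N, hN, hψN⟩ := hψ.2.1.surjOn allOnes_mem
  calc ψ (Matrix.of fun _ _ => 1) = ψ (Matrix.of fun _ _ => 1) ⊙ ψ N := by
        rw [hψN]
        exact (Matrix.hadamard_of_one _).symm
    _ = ψ ((Matrix.of fun _ _ => 1) ⊙ N) := (hψ.map_hadamard allOnes_mem hN).symm
    _ = Matrix.of fun _ _ => 1 := (congrArg ψ (Matrix.of_one_hadamard N)).trans hψN

end IsBMAut

section FixedPoints

variable {V : Type} [Fintype V] [DecidableEq V] {d : ℕ} {S : AssocScheme d V}
  {Γ : Set (Matrix V V ℂ → Matrix V V ℂ)}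

/-- The subspace of the Bose–Mesner algebra fixed by every member of a set of automorphisms. -/
def fixedSubmodule (hΓ : ∀ ψ ∈ Γ, IsBMAut S ψ) : Submodule ℂ (Matrix V V ℂ) where
  carrier := {M | M ∈ S.bm ∧ ∀ ψ ∈ Γ, ψ M = M}
  zero_mem' := ⟨S.bm.zero_mem, fun ψ hψ => (hΓ ψ hψ).map_zero⟩
  add_mem' := fun ⟨hM, fixM⟩ ⟨hN, fixN⟩ => ⟨S.bm.add_mem hM hN, fun ψ hψ => by
    rw [(hΓ ψ hψ).map_add hM hN, fixM ψ hψ, fixN ψ hψ]⟩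
  smul_mem' := fun c _ ⟨hM, fixM⟩ => ⟨S.bm.smul_mem c hM, fun ψ hψ => by
    rw [(hΓ ψ hψ).map_smul c hM, fixM ψ hψ]⟩

lemma isCoherent_fixedSubmodule (hΓ : ∀ ψ ∈ Γ, IsBMAut S ψ) : IsCoherent (fixedSubmodule hΓ) where
  one_mem := ⟨S.isCoherent_bm.one_mem, fun ψ hψ => (hΓ ψ hψ).map_one⟩
  allOnes_mem := ⟨S.isCoherent_bm.allOnes_mem, fun ψ hψ => (hΓ ψ hψ).map_allOnes⟩
  mul_mem := fun _ ⟨hM, fixM⟩ _ ⟨hN, fixN⟩ => ⟨S.mul_mem_bm hM hN, fun ψ hψ => by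
    rw [(hΓ ψ hψ).map_mul hM hN, fixM ψ hψ, fixN ψ hψ]⟩
  hadamard_mem := fun _ ⟨hM, fixM⟩ _ ⟨hN, fixN⟩ => ⟨S.hadamard_mem_bm hM hN, fun ψ hψ => by
    rw [(hΓ ψ hψ).map_hadamard hM hN, fixM ψ hψ, fixN ψ hψ]⟩
  conjTranspose_mem := fun _ ⟨hM, fixM⟩ => ⟨S.conjTranspose_mem_bm hM, fun ψ hψ => by
    rw [(hΓ ψ hψ).map_conjTranspose hM, fixM ψ hψ]⟩

theorem fixed_subalgebra_is_subscheme_general (hΓ : ∀ ψ ∈ Γ, IsBMAut S ψ) :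
    ∃ (e : ℕ) (T : AssocScheme e V),
      (∀ k, ∃ s : Finset (Fin (d + 1)), T.A k = ∑ i ∈ s, S.A i) ∧
      ((T.bm : Set (Matrix V V ℂ))
          = {M | M ∈ S.bm ∧ ∀ ψ ∈ Γ, ψ M = M}) := by
  obtain ⟨e, T, isSubscheme, bm_eq⟩ :=
    S.exists_subscheme_bm_eq (isCoherent_fixedSubmodule hΓ) fun _ hM => hM.1
  exact ⟨e, T, isSubscheme, congrArg SetLike.coe bm_eq⟩

end FixedPoints

/-- The matrices of the Bose–Mesner algebra fixed by every member of a
group `Γ` of algebra automorphisms form the Bose–Mesner algebra of a subscheme. -/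
theorem fixed_subalgebra_is_subscheme {V : Type} [Fintype V] [DecidableEq V]
    {d : ℕ} (S : AssocScheme d V)
    (Γ : Set (Matrix V V ℂ → Matrix V V ℂ))
    (hΓaut : ∀ ψ ∈ Γ, IsBMAut S ψ)
    (hΓone : ∃ ψ ∈ Γ, ∀ M ∈ S.bm, ψ M = M)
    (hΓcomp : ∀ ψ ∈ Γ, ∀ φ ∈ Γ, ∃ χ ∈ Γ, ∀ M ∈ S.bm, χ M = ψ (φ M))
    (hΓinv : ∀ ψ ∈ Γ, ∃ φ ∈ Γ, ∀ M ∈ S.bm, φ (ψ M) = M) :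
    ∃ (e : ℕ) (T : AssocScheme e V),
      (∀ k, ∃ s : Finset (Fin (d + 1)), T.A k = ∑ i ∈ s, S.A i) ∧
      ((T.bm : Set (Matrix V V ℂ))
          = {M | M ∈ S.bm ∧ ∀ ψ ∈ Γ, ψ M = M}) :=
  fixed_subalgebra_is_subscheme_general hΓaut
end

section
/- (Klemm; MacWilliams theorem for the symmetrized weight enumerator over ℤ/4.) Let n ≥ 1 and let C be a subgroup of (ℤ/4)^n. Then, as polynomials, swe_{C⊥}(s,t,u) = (1/|C|)·swe_C(s+2t+u, s−u, s−2t+u). -/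
open Finset MvPolynomial

/-- `n_r(x)`: the number of coordinates of `x ∈ (ℤ/4)ⁿ` equal to `r` (mod 4). -/
def countCoord (n : ℕ) (x : Fin n → ZMod 4) (r : ℕ) : ℕ :=
  (Finset.univ.filter fun j => x j = (r : ZMod 4)).card

/-- The symmetrized weight enumerator
`swe_C(s,t,u) = Σ_{x ∈ C} s^{n₀} t^{n₁+n₃} u^{n₂}`, in the variables `X 0, X 1, X 2`. -/
noncomputable def swe (n : ℕ) (Cd : Finset (Fin n → ZMod 4)) : MvPolynomial (Fin 3) ℂ :=
  ∑ x ∈ Cd,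
    MvPolynomial.X 0 ^ countCoord n x 0 *
      MvPolynomial.X 1 ^ (countCoord n x 1 + countCoord n x 3) *
        MvPolynomial.X 2 ^ countCoord n x 2

/-- The dual code `C⊥ = {y : Σ_j x_j y_j = 0 in ℤ/4 for all x ∈ C}`. -/
def dualZ4Code (n : ℕ) (Cd : Finset (Fin n → ZMod 4)) : Finset (Fin n → ZMod 4) :=
  Finset.univ.filter fun y => ∀ x ∈ Cd, ∑ j, x j * y j = 0

/-!
Expanding a product of Fourier transforms `∏ j, f̂ (x j)` gives `∑ y, ψ (x ⬝ᵥ y) ∏ j, f (y j)`.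
Summing over `x` in a linear code `C`, orthogonality of characters keeps each `y` for which
`x ↦ ψ (x ⬝ᵥ y)` is trivial on `C`, with multiplicity `|C|`; as `ψ` is primitive and `C` is stable
under scalars, these are the `y ∈ C⊥`. The symmetrized weight enumerator is the case where `f`
takes the values `s, t, u, t` on `ℤ/4`, and then `f̂` takes the values
`s + 2t + u, s - u, s - 2t + u, s - u`.
-/

lemma addChar_sum_eq_prod {ι G M : Type*} [AddCommMonoid G] [CommMonoid M] (ψ : AddChar G M)
    (s : Finset ι) (g : ι → G) : ψ (∑ j ∈ s, g j) = ∏ j ∈ s, ψ (g j) :=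
  (congrArg ψ.toMonoidHom (ofAdd_sum s g)).trans (map_prod ψ.toMonoidHom _ s)

section FourierTransform

variable {ι R K A : Type*} [CommRing R] [Fintype R] [CommSemiring K] [CommSemiring A]
  [Algebra K A]

/-- The Fourier transform `a ↦ ∑ b, ψ (a * b) • f b` of a weight function `f` on a finite ring with
respect to an additive character `ψ`. There is no sign in the argument of `ψ` and no
normalizing factor. -/
def addCharTransform (ψ : AddChar R K) (f : R → A) (a : R) : A :=
  ∑ b, ψ (a * b) • f b

lemma prod_addCharTransform [Fintype ι] [DecidableEq ι] (ψ : AddChar R K) (f : ι → R → A)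
    (x : ι → R) :
    ∏ j, addCharTransform ψ (f j) (x j) = ∑ y : ι → R, ψ (x ⬝ᵥ y) • ∏ j, f j (y j) := by
  simp only [addCharTransform, Finset.prod_univ_sum, Fintype.piFinset_univ, Finset.prod_smul,
    dotProduct, addChar_sum_eq_prod]

end FourierTransform

section MacWilliams

variable {ι R K A : Type*} [Fintype ι] [CommRing R]

/-- The dual of a linear code `C` over a commutative ring: the vectors orthogonal to all of `C` for
the dot product. For subgroups of `(ℤ/4)ⁿ` its underlying set is `dualZ4Code`. -/
def dualCode (C : Submodule R (ι → R)) : Submodule R (ι → R) where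
  carrier := {y | ∀ x ∈ C, x ⬝ᵥ y = 0}
  zero_mem' := fun x _ ↦ dotProduct_zero x
  add_mem' := fun hy hz x hx ↦ by rw [dotProduct_add, hy x hx, hz x hx, add_zero]
  smul_mem' := fun r y hy x hx ↦ by rw [dotProduct_smul, hy x hx, smul_zero]

lemma mem_dualCode_iff_forall_addChar_eq_one [CommMonoid K] {ψ : AddChar R K}
    (hψ : ψ.IsPrimitive) (C : Submodule R (ι → R)) (y : ι → R) :
    y ∈ dualCode C ↔ ∀ x ∈ C, ψ (x ⬝ᵥ y) = 1 := by
  refine ⟨fun hy x hx ↦ by rw [hy x hx, AddChar.map_zero_eq_one], fun h x hx ↦ ?_⟩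
  by_contra hxy
  refine hψ hxy (DFunLike.ext _ _ fun r ↦ ?_)
  rw [AddChar.mulShift_apply, mul_comm, ← smul_eq_mul, ← smul_dotProduct,
    h _ (C.smul_mem r hx), AddChar.one_apply]

variable [CommSemiring K] [IsDomain K] {ψ : AddChar R K}

lemma sum_addChar_dotProduct_eq_ite (hψ : ψ.IsPrimitive) (C : Submodule R (ι → R)) [Fintype C]
    (y : ι → R) [Decidable (y ∈ dualCode C)] :
    ∑ x : C, ψ (x ⬝ᵥ y) = if y ∈ dualCode C then (Fintype.card C : K) else 0 := by
  classical
  let χ : AddChar C K :=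
    { toFun := fun x ↦ ψ (x ⬝ᵥ y)
      map_zero_eq_one' := by simp
      map_add_eq_mul' := by simp [add_dotProduct, AddChar.map_add_eq_mul] }
  have χ_eq_zero_iff : χ = 0 ↔ y ∈ dualCode C := by
    rw [mem_dualCode_iff_forall_addChar_eq_one hψ, AddChar.eq_zero_iff, Subtype.forall]
    rfl
  calc ∑ x : C, ψ (x ⬝ᵥ y)
      = if χ = 0 then (Fintype.card C : K) else 0 := AddChar.sum_eq_ite χ
    _ = if y ∈ dualCode C then (Fintype.card C : K) else 0 := by simp only [χ_eq_zero_iff]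

theorem sum_prod_addCharTransform_eq_card_smul_sum_dualCode [Fintype R] [CommSemiring A]
    [Algebra K A] (hψ : ψ.IsPrimitive) (C : Submodule R (ι → R)) [Fintype C]
    [Fintype (dualCode C)] (f : ι → R → A) :
    ∑ x : C, ∏ j, addCharTransform ψ (f j) (x.1 j) =
      (Fintype.card C : K) • ∑ y : dualCode C, ∏ j, f j (y.1 j) := by
  classical
  calc ∑ x : C, ∏ j, addCharTransform ψ (f j) (x.1 j)
      = ∑ y : ι → R, (∑ x : C, ψ (x ⬝ᵥ y)) • ∏ j, f j (y j) := by
        simp only [prod_addCharTransform, Finset.sum_smul]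
        exact Finset.sum_comm
    _ = ∑ y with y ∈ dualCode C, (Fintype.card C : K) • ∏ j, f j (y j) := by
        simp only [sum_addChar_dotProduct_eq_ite hψ, ite_smul, zero_smul, Finset.sum_filter]
    _ = (Fintype.card C : K) • ∑ y : dualCode C, ∏ j, f j (y.1 j) := by
        rw [← Finset.smul_sum, Finset.sum_subtype _ (Finset.mem_filter_univ ·)]

end MacWilliams

section SymmetrizedWeight

variable {A : Type*}

/-- The weight function on `ℤ/4` whose coordinatewise products are the monomials of the symmetrized
weight enumerator: `0, 1, 2, 3` get weights `s, t, u, t`. The vector notation relies on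
`ZMod 4` being `Fin 4` by definition. -/
def symWeight (s t u : A) : ZMod 4 → A := ![s, t, u, t]

lemma prod_symWeight [CommMonoid A] {n : ℕ} (s t u : A) (x : Fin n → ZMod 4) :
    ∏ j, symWeight s t u (x j) =
      s ^ countCoord n x 0 * t ^ (countCoord n x 1 + countCoord n x 3) * u ^ countCoord n x 2 := by
  calc ∏ j, symWeight s t u (x j)
      = ∏ a : ZMod 4, symWeight s t u a ^ #{j | x j = a} := by
        simp only [← Finset.prod_const, Finset.prod_fiberwise']
    _ = s ^ #{j | x j = 0} * t ^ #{j | x j = 1} * u ^ #{j | x j = 2} * t ^ #{j | x j = 3} :=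
        Fin.prod_univ_four _
    _ = _ := by
        simp only [countCoord, Nat.cast_zero, Nat.cast_one, Nat.cast_ofNat]
        rw [pow_add, ← mul_assoc, mul_right_comm]

lemma swe_eq_sum_prod_symWeight (n : ℕ) (Cd : Finset (Fin n → ZMod 4)) :
    swe n Cd = ∑ x ∈ Cd, ∏ j, symWeight (X 0) (X 1) (X 2) (x j) := by
  simp only [swe, prod_symWeight]

lemma aeval_swe [CommSemiring A] [Algebra ℂ A] (n : ℕ) (Cd : Finset (Fin n → ZMod 4))
    (s t u : A) :
    aeval ![s, t, u] (swe n Cd) = ∑ x ∈ Cd, ∏ j, symWeight s t u (x j) := by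
  simp [swe, prod_symWeight]

variable {K : Type*} [CommRing K] [IsDomain K] {ψ : AddChar (ZMod 4) K}

lemma zmod_four_char_two_of_isPrimitive (hψ : ψ.IsPrimitive) : ψ 2 = -1 := by
  have sq_eq_one : ψ 2 ^ 2 = 1 := by
    rw [← AddChar.map_nsmul_eq_pow, show 2 • (2 : ZMod 4) = 0 from rfl, AddChar.map_zero_eq_one]
  have ne_one : ψ 2 ≠ 1 := (hψ.zmod_char_eq_one_iff 4 2).not.mpr (by decide)
  exact (sq_eq_one_iff.mp sq_eq_one).resolve_left ne_one

lemma zmod_four_char_three_of_isPrimitive (hψ : ψ.IsPrimitive) : ψ 3 = -ψ 1 := by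
  rw [show (3 : ZMod 4) = 1 + 2 from rfl, AddChar.map_add_eq_mul,
    zmod_four_char_two_of_isPrimitive hψ, mul_neg_one]

lemma addCharTransform_symWeight [CommRing A] [Algebra K A] (hψ : ψ.IsPrimitive) (s t u : A) :
    addCharTransform ψ (symWeight s t u) =
      symWeight (s + 2 * t + u) (s - u) (s - 2 * t + u) := by
  have expand (a : ZMod 4) : addCharTransform ψ (symWeight s t u) a =
      ψ (a * 0) • s + ψ (a * 1) • t + ψ (a * 2) • u + ψ (a * 3) • t := Fin.sum_univ_four _
  have ψ_two := zmod_four_char_two_of_isPrimitive hψ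
  have ψ_three := zmod_four_char_three_of_isPrimitive hψ
  funext a
  rw [expand]
  fin_cases a
  · change ψ 0 • s + ψ 0 • t + ψ 0 • u + ψ 0 • t = s + 2 * t + u
    simp only [AddChar.map_zero_eq_one, one_smul]
    ring
  · change ψ 0 • s + ψ 1 • t + ψ 2 • u + ψ 3 • t = s - u
    simp only [AddChar.map_zero_eq_one, ψ_two, ψ_three, one_smul, neg_smul]
    ring
  · change ψ 0 • s + ψ 2 • t + ψ 0 • u + ψ 2 • t = s - 2 * t + u
    simp only [AddChar.map_zero_eq_one, ψ_two, one_smul, neg_smul]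
    ring
  · change ψ 0 • s + ψ 3 • t + ψ 2 • u + ψ 1 • t = s - u
    simp only [AddChar.map_zero_eq_one, ψ_two, ψ_three, one_smul, neg_smul]
    ring

end SymmetrizedWeight

/-- Klemm; MacWilliams theorem for the symmetrized weight enumerator
over `ℤ/4`: `swe_{C⊥}(s,t,u) = |C|⁻¹ swe_C(s+2t+u, s-u, s-2t+u)`. -/
theorem macwilliams_swe_z4 (n : ℕ) (hn : 1 ≤ n)
    (Cd : Finset (Fin n → ZMod 4))
    (hC0 : (0 : Fin n → ZMod 4) ∈ Cd)
    (hCsub : ∀ x ∈ Cd, ∀ y ∈ Cd, x - y ∈ Cd) :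
    swe n (dualZ4Code n Cd)
      = (Cd.card : ℂ)⁻¹ •
          MvPolynomial.aeval
            ![MvPolynomial.X 0 + MvPolynomial.C 2 * MvPolynomial.X 1 + MvPolynomial.X 2,
              MvPolynomial.X 0 - MvPolynomial.X 2,
              MvPolynomial.X 0 - MvPolynomial.C 2 * MvPolynomial.X 1 + MvPolynomial.X 2]
            (swe n Cd) := by
  classical
  let C : Submodule (ZMod 4) (Fin n → ZMod 4) :=
    AddSubgroup.toZModSubmodule 4 (AddSubgroup.ofSub (Cd : Set (Fin n → ZMod 4)) ⟨0, hC0⟩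
      fun x hx y hy ↦ sub_eq_add_neg x y ▸ hCsub x hx y hy)
  have mem_C (x : Fin n → ZMod 4) : x ∈ Cd ↔ x ∈ C := Iff.rfl
  have card_C : Fintype.card C = #Cd := Fintype.card_of_subtype Cd mem_C
  have mem_dual (y : Fin n → ZMod 4) : y ∈ dualZ4Code n Cd ↔ y ∈ dualCode C :=
    Finset.mem_filter_univ y
  have hψ : (ZMod.stdAddChar (N := 4)).IsPrimitive := ZMod.isPrimitive_stdAddChar 4
  have card_ne_zero : (#Cd : ℂ) ≠ 0 := Nat.cast_ne_zero.mpr (card_ne_zero_of_mem hC0)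
  rw [eq_inv_smul_iff₀ card_ne_zero, aeval_swe, map_ofNat]
  calc (#Cd : ℂ) • swe n (dualZ4Code n Cd)
      = ∑ x : C, ∏ j, addCharTransform ZMod.stdAddChar (symWeight (X 0) (X 1) (X 2)) (x.1 j) := by
        rw [sum_prod_addCharTransform_eq_card_smul_sum_dualCode hψ, card_C,
          swe_eq_sum_prod_symWeight, Finset.sum_subtype _ mem_dual]
    _ = ∑ x ∈ Cd, ∏ j, symWeight (X 0 + 2 * X 1 + X 2) (X 0 - X 2) (X 0 - 2 * X 1 + X 2) (x j) := by
        rw [addCharTransform_symWeight hψ, Finset.sum_subtype Cd mem_C]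
end
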